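/- The Weyl group W acts transitively on C: for any two elements c1, c2 ∈ C there exists w ∈ W which maps c1 to c2 (applying w to every root in every pair of c1). -/

import Mathlib

noncomputable section

/-- The standard dot product on ℝ^8. -/
def dot (a b : Fin 8 → ℝ) : ℝ := ∑ i, a i * b i

/-- Membership in the E8 lattice Λ: all coordinates are integers or all lie in ℤ + 1/2,
and the coordinates sum to an even integer. -/
def inLambda (a : Fin 8 → ℝ) : Prop :=
  ((∀ i, ∃ n : ℤ, a i = n) ∨ (∀ i, ∃ n : ℤ, a i = n + 1 / 2)) ∧
    ∃ n : ℤ, (∑ i, a i) = 2 * n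

/-- The E8 root system E: lattice vectors of squared norm 2. -/
def isRoot (a : Fin 8 → ℝ) : Prop := inLambda a ∧ dot a a = 2

/-- The Weyl group W: linear isometries of ℝ^8 mapping the root system E onto itself. -/
def IsWeyl (w : (Fin 8 → ℝ) ≃ₗ[ℝ] (Fin 8 → ℝ)) : Prop :=
  (∀ a b : Fin 8 → ℝ, dot (w a) (w b) = dot a b) ∧
    (⇑w '' {a | isRoot a} = {a | isRoot a})

/-- An element of the set `C`: a family of seven unordered pairs of roots
`{{e₁,f₁},…,{e₇,f₇}}` with `eᵢ·fᵢ = 0` for each `i`, and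
`eᵢ·eⱼ = eᵢ·fⱼ = fᵢ·fⱼ = 1` for all `i ≠ j` (the vertex set of a 7-crosspolytope
facet of the E8 root polytope). -/
def IsCross (P : Set (Set (Fin 8 → ℝ))) : Prop :=
  ∃ e f : Fin 7 → (Fin 8 → ℝ),
    P = Set.range (fun i => ({e i, f i} : Set (Fin 8 → ℝ))) ∧
    (∀ i, isRoot (e i) ∧ isRoot (f i)) ∧
    (∀ i, dot (e i) (f i) = 0) ∧
    (∀ i j, i ≠ j →
      dot (e i) (e j) = 1 ∧ dot (e i) (f j) = 1 ∧ dot (f i) (f j) = 1)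

/-! Let `v` be the common sum of the seven pairs of a family in `C`. The vector `v / 2` and the
seven vectors `(eᵢ - fᵢ) / 2` form an orthonormal basis `g₀, …, g₇`, the pairs are recovered as
`g₀ ± gᵢ`, and hence `Λ` contains the lattice `D₈` spanned by all `gᵢ ± gⱼ`. As `Λ` is even and
`g₀` has norm `1`, `g₀` does not lie in `Λ`, which is its own dual; so some element of `Λ` has
half-integral coordinates in the basis `g`. Modulo `D₈` it is `½ ∑ gᵢ`, up to changing the sign of
any prescribed `gⱼ`. Changing the sign of `gⱼ` with `j ≠ 0` only swaps the two roots of a pair, so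
we may assume `½ ∑ gᵢ ∈ Λ`. Then passing to coordinates in the basis `g` preserves `Λ`, and it
carries the given family to the one attached to the standard basis. -/

section EvenUnimodular

variable {ι : Type*} [Fintype ι]

/-- An even unimodular lattice in `ℝ^ι`: every element has even norm, and the lattice contains its
dual. The reverse inclusion is `IsEvenUnimodular.exists_dotProduct_eq_intCast`. -/
structure IsEvenUnimodular (L : AddSubgroup (ι → ℝ)) : Prop where
  even_norm : ∀ x ∈ L, ∃ k : ℤ, x ⬝ᵥ x = 2 * k
  mem_of_dual : ∀ x, (∀ y ∈ L, ∃ k : ℤ, x ⬝ᵥ y = k) → x ∈ L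

theorem IsEvenUnimodular.exists_dotProduct_eq_intCast {L : AddSubgroup (ι → ℝ)}
    (hL : IsEvenUnimodular L) {x y : ι → ℝ} (hx : x ∈ L) (hy : y ∈ L) :
    ∃ k : ℤ, x ⬝ᵥ y = k := by
  obtain ⟨a, ha⟩ := hL.even_norm x hx
  obtain ⟨b, hb⟩ := hL.even_norm y hy
  obtain ⟨c, hc⟩ := hL.even_norm (x + y) (L.add_mem hx hy)
  have polarization : (x + y) ⬝ᵥ (x + y) = x ⬝ᵥ x + 2 * (x ⬝ᵥ y) + y ⬝ᵥ y := by
    rw [add_dotProduct, dotProduct_add, dotProduct_add, dotProduct_comm y x]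
    ring
  refine ⟨c - a - b, ?_⟩
  push_cast
  linarith

theorem IsEvenUnimodular.map_mem_iff {κ : Type*} [Fintype κ] {L : AddSubgroup (ι → ℝ)}
    {M : AddSubgroup (κ → ℝ)} (hL : IsEvenUnimodular L) (hM : IsEvenUnimodular M)
    {w : (ι → ℝ) → κ → ℝ} (hdot : ∀ x y, w x ⬝ᵥ w y = x ⬝ᵥ y) (hmaps : ∀ x ∈ L, w x ∈ M)
    (x : ι → ℝ) : w x ∈ M ↔ x ∈ L := by
  refine ⟨fun hx => hL.mem_of_dual x fun y hy => ?_, hmaps x⟩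
  rw [← hdot]
  exact hM.exists_dotProduct_eq_intCast hx (hmaps y hy)

end EvenUnimodular

section Orthonormal

variable {ι κ : Type*} [Fintype ι] [DecidableEq κ]

/-- The counterpart of `Orthonormal` for the dot product on `ι → ℝ`, whose norm in Mathlib is not
the Euclidean one. -/
def IsOrthonormal (g : κ → ι → ℝ) : Prop :=
  ∀ i j, g i ⬝ᵥ g j = if i = j then 1 else 0

namespace IsOrthonormal

theorem update_neg {g : κ → ι → ℝ} (hg : IsOrthonormal g) (j : κ) :
    IsOrthonormal (Function.update g j (-g j)) := by
  intro i k
  have hik := hg i k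
  by_cases hi : i = j <;> by_cases hk : k = j <;>
    simp_all [eq_comm (a := j)]

variable [DecidableEq ι] {g : ι → ι → ℝ} (hg : IsOrthonormal g)

/-- The coordinate map `x ↦ (gᵢ · x)ᵢ` of an orthonormal basis `g`. -/
def coordEquiv : (ι → ℝ) ≃ₗ[ℝ] (ι → ℝ) :=
  Matrix.UnitaryGroup.toLinearEquiv
    ⟨Matrix.of g, (Matrix.mem_orthogonalGroup_iff ι ℝ).2 (Matrix.ext hg)⟩

theorem coordEquiv_apply (x : ι → ℝ) (i : ι) : hg.coordEquiv x i = g i ⬝ᵥ x :=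
  rfl

theorem coordEquiv_apply_self (j : ι) : hg.coordEquiv (g j) = Pi.single j 1 := by
  ext i
  rw [coordEquiv_apply, hg, Pi.single_apply]

include hg

theorem sum_dotProduct_smul (x : ι → ℝ) : ∑ i, (g i ⬝ᵥ x) • g i = x := by
  apply hg.coordEquiv.injective
  rw [map_sum]
  simp only [map_smul, coordEquiv_apply_self, ← coordEquiv_apply hg]
  exact (pi_eq_sum_univ' _).symm

theorem coordEquiv_dotProduct_coordEquiv (x y : ι → ℝ) :
    hg.coordEquiv x ⬝ᵥ hg.coordEquiv y = x ⬝ᵥ y := by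
  conv_rhs => rw [← hg.sum_dotProduct_smul x]
  simp only [sum_dotProduct, smul_dotProduct]
  rfl

end IsOrthonormal

end Orthonormal

section DFrame

theorem forall_int_or_forall_half_int_iff {ι : Type*} {a : ι → ℝ} :
    ((∀ i, ∃ n : ℤ, a i = n) ∨ (∀ i, ∃ n : ℤ, a i = n + 1 / 2)) ↔
      ∀ i j, ∃ k : ℤ, a i + a j = k := by
  constructor
  · rintro (h | h) i j <;> obtain ⟨m, hm⟩ := h i <;> obtain ⟨n, hn⟩ := h j
    · exact ⟨m + n, by push_cast; linarith⟩
    · exact ⟨m + n + 1, by push_cast; linarith⟩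
  · intro h
    refine or_iff_not_imp_left.2 fun hnot i => ?_
    obtain ⟨k, hk⟩ := h i i
    obtain ⟨m, rfl | rfl⟩ := k.even_or_odd'
    · have hi : a i = m := by push_cast at hk; linarith
      refine absurd (fun j => ?_) hnot
      obtain ⟨l, hl⟩ := h i j
      exact ⟨l - m, by push_cast; linarith⟩
    · exact ⟨m, by push_cast at hk; linarith⟩

theorem sum_zsmul_mem_of_add_mem {ι G : Type*} [Fintype ι] [AddCommGroup G] {H : AddSubgroup G}
    {g : ι → G} (hg : ∀ i j, g i + g j ∈ H) {m : ι → ℤ} (hm : Even (∑ i, m i)) :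
    ∑ i, m i • g i ∈ H := by
  obtain ⟨k, hk⟩ := hm
  cases isEmpty_or_nonempty ι with
  | inl => simp
  | inr hne =>
    obtain ⟨j⟩ := hne
    have decomposition : ∑ i, m i • g i = ∑ i, m i • (g i + g j) - k • (g j + g j) := by
      simp only [smul_add, Finset.sum_add_distrib, ← Finset.sum_smul, hk, add_smul,
        add_sub_cancel_right]
    rw [decomposition]
    exact H.sub_mem (H.sum_mem fun i _ => H.zsmul_mem (hg i j) _) (H.zsmul_mem (hg j j) k)

variable {ι : Type*} [Fintype ι] [DecidableEq ι]

/-- An orthonormal basis `g` such that `L` contains the lattice of integral combinations of the `gᵢ`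
with even coefficient sum, a copy of the root lattice `D`. That lattice is generated by the
`gᵢ + gⱼ`, where `i = j` is allowed. -/
structure IsDFrame (L : AddSubgroup (ι → ℝ)) (g : ι → ι → ℝ) : Prop where
  orthonormal : IsOrthonormal g
  add_mem : ∀ i j, g i + g j ∈ L

namespace IsDFrame

variable {L : AddSubgroup (ι → ℝ)} {g : ι → ι → ℝ}

theorem sub_mem (hg : IsDFrame L g) (i j : ι) : g i - g j ∈ L := by
  rw [← add_sub_add_right_eq_sub (g i) (g j) (g j)]
  exact L.sub_mem (hg.add_mem i j) (hg.add_mem j j)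

theorem update_neg (hg : IsDFrame L g) (j : ι) : IsDFrame L (Function.update g j (-g j)) where
  orthonormal := hg.orthonormal.update_neg j
  add_mem i k := by
    by_cases hi : i = j <;> by_cases hk : k = j
    · simpa only [hi, hk, Function.update_self, neg_add] using L.neg_mem (hg.add_mem j j)
    · simpa only [hi, Function.update_self, Function.update_of_ne hk, neg_add_eq_sub]
        using hg.sub_mem k j
    · simpa only [hk, Function.update_self, Function.update_of_ne hi, ← sub_eq_add_neg]
        using hg.sub_mem i j
    · simpa only [Function.update_of_ne hi, Function.update_of_ne hk] using hg.add_mem i k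

theorem exists_half_int_coords [Nonempty ι] (hg : IsDFrame L g) (hL : IsEvenUnimodular L) :
    ∃ x ∈ L, ∀ i, ∃ n : ℤ, g i ⬝ᵥ x = n + 1 / 2 := by
  by_contra! hnone
  have int_coords : ∀ x ∈ L, ∀ i, ∃ n : ℤ, g i ⬝ᵥ x = n := fun x hx =>
    (forall_int_or_forall_half_int_iff.2 fun i j => by
      rw [← add_dotProduct]
      exact hL.exists_dotProduct_eq_intCast (hg.add_mem i j) hx).resolve_right
        (by simpa using hnone x hx)
  obtain ⟨i⟩ := ‹Nonempty ι›
  have mem : g i ∈ L := hL.mem_of_dual _ fun x hx => int_coords x hx i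
  obtain ⟨k, hk⟩ := hL.even_norm _ mem
  rw [hg.orthonormal, if_pos rfl] at hk
  have : (1 : ℤ) = 2 * k := by exact_mod_cast hk
  lia

theorem half_sum_mem_or_sub_mem (hg : IsDFrame L g) (hL : IsEvenUnimodular L) (j : ι) :
    (1 / 2 : ℝ) • ∑ i, g i ∈ L ∨ (1 / 2 : ℝ) • ∑ i, g i - g j ∈ L := by
  have : Nonempty ι := ⟨j⟩
  obtain ⟨x, hx, hcoord⟩ := hg.exists_half_int_coords hL
  choose n hn using hcoord
  have expansion : x = ∑ i, n i • g i + (1 / 2 : ℝ) • ∑ i, g i := by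
    rw [← hg.orthonormal.sum_dotProduct_smul x]
    simp only [hn, add_smul, Finset.sum_add_distrib, Finset.smul_sum, Int.cast_smul_eq_zsmul]
  rcases Int.even_or_odd (∑ i, n i) with heven | hodd
  · left
    rw [← add_sub_cancel_left (∑ i, n i • g i) (_ • _), ← expansion]
    exact L.sub_mem hx (sum_zsmul_mem_of_add_mem hg.add_mem heven)
  · right
    have hsum : ∑ i, (n + Pi.single j 1 : ι → ℤ) i • g i ∈ L :=
      sum_zsmul_mem_of_add_mem hg.add_mem
        (by simpa [Finset.sum_add_distrib] using hodd.add_one)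
    convert L.sub_mem hx hsum using 1
    rw [expansion]
    simp only [Pi.add_apply, add_smul, Finset.sum_add_distrib, Pi.single_apply, ite_smul, one_smul,
      zero_smul, Finset.sum_ite_eq', Finset.mem_univ, if_true]
    abel

end IsDFrame

end DFrame

section Crosspolytope

/-- The family of pairs `{g₀ + gᵢ, g₀ - gᵢ}` with `i ≠ 0`. For orthonormal `g` these are the pairs
of opposite vertices of a crosspolytope with centre `g₀`. -/
def crossOf {n : ℕ} {V : Type*} [AddCommGroup V] (g : Fin (n + 1) → V) : Set (Set V) :=
  Set.range fun i : Fin n => {g 0 + g i.succ, g 0 - g i.succ}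

theorem image_crossOf {n : ℕ} {V V' F : Type*} [AddCommGroup V] [AddCommGroup V'] [FunLike F V V']
    [AddMonoidHomClass F V V'] (w : F) (g : Fin (n + 1) → V) :
    (fun s => w '' s) '' crossOf g = crossOf fun i => w (g i) := by
  rw [crossOf, crossOf, ← Set.range_comp]
  simp only [Function.comp_def, Set.image_pair, map_add, map_sub]

theorem crossOf_update_neg {n : ℕ} {V : Type*} [AddCommGroup V] (g : Fin (n + 1) → V) (j : Fin n) :
    crossOf (Function.update g j.succ (-g j.succ)) = crossOf g := by
  refine congrArg Set.range (funext fun i => ?_)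
  rw [Function.update_of_ne (Fin.succ_ne_zero j).symm]
  rcases eq_or_ne i j with rfl | hij
  · rw [Function.update_self, sub_neg_eq_add, ← sub_eq_add_neg, Set.pair_comm]
  · rw [Function.update_of_ne (Fin.succ_injective n |>.ne hij)]

theorem add_mem_of_zero_add_mem_of_zero_sub_mem {n : ℕ} [NeZero n] {G : Type*} [AddCommGroup G]
    {H : AddSubgroup G} {g : Fin (n + 1) → G} (hadd : ∀ i : Fin n, g 0 + g i.succ ∈ H)
    (hsub : ∀ i : Fin n, g 0 - g i.succ ∈ H) (i j : Fin (n + 1)) : g i + g j ∈ H := by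
  cases i using Fin.cases <;> cases j using Fin.cases
  case zero.zero =>
    rw [← add_add_sub_cancel (g 0) (g 0) (g (Fin.succ 0))]
    exact H.add_mem (hadd 0) (hsub 0)
  case zero.succ j => exact hadd j
  case succ.zero i => exact add_comm (g 0) _ ▸ hadd i
  case succ.succ i j =>
    rw [← add_sub_sub_cancel (g 0)]
    exact H.sub_mem (hadd _) (hsub _)

variable {n : ℕ} {ι κ : Type*} [Fintype ι]

/-- The inner products of a family of pairs `{eᵢ, fᵢ}` as in the definition of `C`, over an
arbitrary index set and in `ℝ^ι`. -/
structure IsCrossPairs [DecidableEq κ] (e f : κ → ι → ℝ) : Prop where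
  left_dot_left : ∀ i j, e i ⬝ᵥ e j = if i = j then 2 else 1
  left_dot_right : ∀ i j, e i ⬝ᵥ f j = if i = j then 0 else 1
  right_dot_right : ∀ i j, f i ⬝ᵥ f j = if i = j then 2 else 1

namespace IsCrossPairs

variable [DecidableEq κ] {e f : κ → ι → ℝ}

theorem add_dot_add (h : IsCrossPairs e f) (i j : κ) : (e i + f i) ⬝ᵥ (e j + f j) = 4 := by
  simp only [add_dotProduct, dotProduct_add, dotProduct_comm (f i) (e j), h.left_dot_left,
    h.left_dot_right, h.right_dot_right, eq_comm (a := j)]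
  split_ifs <;> norm_num

theorem add_dot_sub (h : IsCrossPairs e f) (i j : κ) : (e i + f i) ⬝ᵥ (e j - f j) = 0 := by
  simp only [add_dotProduct, dotProduct_sub, dotProduct_comm (f i) (e j), h.left_dot_left,
    h.left_dot_right, h.right_dot_right, eq_comm (a := j)]
  split_ifs <;> norm_num

theorem sub_dot_sub (h : IsCrossPairs e f) (i j : κ) :
    (e i - f i) ⬝ᵥ (e j - f j) = if i = j then 4 else 0 := by
  simp only [sub_dotProduct, dotProduct_sub, dotProduct_comm (f i) (e j), h.left_dot_left,
    h.left_dot_right, h.right_dot_right, eq_comm (a := j)]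
  split_ifs <;> norm_num

theorem add_eq_add (h : IsCrossPairs e f) (i j : κ) : e i + f i = e j + f j := by
  rw [← sub_eq_zero, ← dotProduct_self_eq_zero, sub_dotProduct, dotProduct_sub, dotProduct_sub]
  simp only [h.add_dot_add, sub_self]

end IsCrossPairs

variable [NeZero n] {e f : Fin n → ι → ℝ}

/-- The vectors `½(e₀ + f₀)` and `½(eᵢ - fᵢ)`: the centre of the crosspolytope with pairs of
opposite vertices `{eᵢ, fᵢ}`, followed by its semi-axes. -/
def crossFrame (e f : Fin n → ι → ℝ) : Fin (n + 1) → ι → ℝ :=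
  Fin.cons ((1 / 2 : ℝ) • (e 0 + f 0)) fun i => (1 / 2 : ℝ) • (e i - f i)

namespace IsCrossPairs

theorem crossFrame_zero_add_succ (h : IsCrossPairs e f) (i : Fin n) :
    crossFrame e f 0 + crossFrame e f i.succ = e i := by
  rw [crossFrame, Fin.cons_zero, Fin.cons_succ, h.add_eq_add 0 i]
  module

theorem crossFrame_zero_sub_succ (h : IsCrossPairs e f) (i : Fin n) :
    crossFrame e f 0 - crossFrame e f i.succ = f i := by
  rw [crossFrame, Fin.cons_zero, Fin.cons_succ, h.add_eq_add 0 i]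
  module

theorem crossOf_crossFrame (h : IsCrossPairs e f) :
    crossOf (crossFrame e f) = Set.range fun i => {e i, f i} := by
  simp only [crossOf, h.crossFrame_zero_add_succ, h.crossFrame_zero_sub_succ]

theorem isOrthonormal_crossFrame (h : IsCrossPairs e f) : IsOrthonormal (crossFrame e f) := by
  intro i j
  cases i using Fin.cases <;> cases j using Fin.cases <;>
    simp only [crossFrame, Fin.cons_zero, Fin.cons_succ, smul_dotProduct, dotProduct_smul,
      smul_eq_mul]
  case zero.zero => norm_num [h.add_dot_add]
  case zero.succ j => rw [h.add_dot_sub, if_neg (Fin.succ_ne_zero j).symm, mul_zero, mul_zero]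
  case succ.zero i =>
    rw [dotProduct_comm, h.add_dot_sub, if_neg (Fin.succ_ne_zero i), mul_zero, mul_zero]
  case succ.succ i j =>
    rw [h.sub_dot_sub]
    simp only [Fin.succ_inj]
    split_ifs <;> norm_num

end IsCrossPairs

end Crosspolytope

section E8

theorem inLambda_iff {a : Fin 8 → ℝ} :
    inLambda a ↔ (∀ i j, ∃ k : ℤ, a i + a j = k) ∧ ∃ n : ℤ, ∑ i, a i = 2 * n :=
  and_congr_left' forall_int_or_forall_half_int_iff

/-- The lattice `Λ` as an additive subgroup of `ℝ^8`. -/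
def e8Lattice : AddSubgroup (Fin 8 → ℝ) where
  carrier := {a | inLambda a}
  zero_mem' := inLambda_iff.2 ⟨fun _ _ => ⟨0, by simp⟩, 0, by simp⟩
  add_mem' {a b} ha hb := by
    obtain ⟨ha, s, hs⟩ := inLambda_iff.1 ha
    obtain ⟨hb, t, ht⟩ := inLambda_iff.1 hb
    refine inLambda_iff.2 ⟨fun i j => ?_, s + t, ?_⟩
    · obtain ⟨k, hk⟩ := ha i j
      obtain ⟨l, hl⟩ := hb i j
      exact ⟨k + l, by simp only [Pi.add_apply]; push_cast; linarith⟩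
    · simp only [Pi.add_apply, Finset.sum_add_distrib]
      push_cast
      linarith
  neg_mem' {a} ha := by
    obtain ⟨ha, s, hs⟩ := inLambda_iff.1 ha
    refine inLambda_iff.2 ⟨fun i j => ?_, -s, ?_⟩
    · obtain ⟨k, hk⟩ := ha i j
      exact ⟨-k, by simp only [Pi.neg_apply]; push_cast; linarith⟩
    · simp only [Pi.neg_apply, Finset.sum_neg_distrib]
      push_cast
      linarith

theorem mem_e8Lattice_iff {a : Fin 8 → ℝ} :
    a ∈ e8Lattice ↔ (∀ i j, ∃ k : ℤ, a i + a j = k) ∧ ∃ n : ℤ, ∑ i, a i = 2 * n :=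
  inLambda_iff

theorem e8Lattice_even_norm {a : Fin 8 → ℝ} (ha : a ∈ e8Lattice) :
    ∃ k : ℤ, a ⬝ᵥ a = 2 * k := by
  obtain ⟨h | h, s, hs⟩ := ha
  all_goals
    choose n hn using h
    simp only [hn] at hs
    simp only [dotProduct, hn]
  · obtain ⟨k, hk⟩ := Finset.even_sum (s := .univ) _ fun i _ => Int.even_mul_pred_self (n i)
    refine ⟨k + s, ?_⟩
    have hk : ∑ i, (n i : ℝ) * (n i - 1) = k + k := by exact_mod_cast hk
    simp only [mul_sub, mul_one, Finset.sum_sub_distrib] at hk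
    push_cast
    linarith
  · obtain ⟨k, hk⟩ := Finset.even_sum (s := .univ) _ fun i _ => Int.even_mul_succ_self (n i)
    refine ⟨k + 1, ?_⟩
    have hk : ∑ i, (n i : ℝ) * (n i + 1) = k + k := by exact_mod_cast hk
    have square (t : ℝ) : (t + 1 / 2) * (t + 1 / 2) = t * (t + 1) + 1 / 4 := by ring
    simp only [square, Finset.sum_add_distrib, hk, Finset.sum_const, Finset.card_univ,
      Fintype.card_fin, nsmul_eq_mul]
    push_cast
    ring

theorem single_add_single_mem_e8Lattice (i j : Fin 8) :
    Pi.single i 1 + Pi.single j 1 ∈ e8Lattice := by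
  refine ⟨Or.inl fun k => ⟨(Pi.single i 1 + Pi.single j 1 : Fin 8 → ℤ) k, ?_⟩, 1, ?_⟩
  · simp [Pi.single_apply]
  · simp [Finset.sum_add_distrib, one_add_one_eq_two]

theorem const_half_mem_e8Lattice : (fun _ => 1 / 2) ∈ e8Lattice :=
  ⟨Or.inr fun _ => ⟨0, by norm_num⟩, 2, by norm_num⟩

theorem isEvenUnimodular_e8Lattice : IsEvenUnimodular e8Lattice where
  even_norm _ := e8Lattice_even_norm
  mem_of_dual x hx := by
    refine mem_e8Lattice_iff.2 ⟨fun i j => ?_, ?_⟩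
    · simpa using hx _ (single_add_single_mem_e8Lattice i j)
    · obtain ⟨k, hk⟩ := hx _ const_half_mem_e8Lattice
      refine ⟨k, ?_⟩
      rw [← hk, dotProduct, ← Finset.sum_mul]
      ring

theorem IsDFrame.coordEquiv_mem_e8Lattice {g : Fin 8 → Fin 8 → ℝ} (hg : IsDFrame e8Lattice g)
    (hhalf : (1 / 2 : ℝ) • ∑ i, g i ∈ e8Lattice) {x : Fin 8 → ℝ} (hx : x ∈ e8Lattice) :
    hg.orthonormal.coordEquiv x ∈ e8Lattice := by
  have integral {y} (hy : y ∈ e8Lattice) : ∃ k : ℤ, y ⬝ᵥ x = k :=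
    isEvenUnimodular_e8Lattice.exists_dotProduct_eq_intCast hy hx
  simp only [mem_e8Lattice_iff, IsOrthonormal.coordEquiv_apply, ← add_dotProduct,
    ← sum_dotProduct]
  refine ⟨fun i j => integral (hg.add_mem i j), ?_⟩
  obtain ⟨k, hk⟩ := integral hhalf
  refine ⟨k, ?_⟩
  rw [← hk, smul_dotProduct, smul_eq_mul]
  ring

end E8

section Weyl

variable {w v : (Fin 8 → ℝ) ≃ₗ[ℝ] (Fin 8 → ℝ)} {c : Set (Set (Fin 8 → ℝ))}

theorem isWeyl_of_mem_e8Lattice_iff (hdot : ∀ x y, w x ⬝ᵥ w y = x ⬝ᵥ y)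
    (hmem : ∀ x, w x ∈ e8Lattice ↔ x ∈ e8Lattice) : IsWeyl w := by
  refine ⟨hdot, ?_⟩
  have preimage_roots : ⇑w ⁻¹' {a | isRoot a} = {a | isRoot a} :=
    Set.ext fun x => and_congr (hmem x) (by rw [dot, dot]; exact (hdot x x).congr_left)
  conv_lhs => rw [← preimage_roots]
  exact Set.image_preimage_eq _ w.surjective

theorem IsWeyl.trans (hw : IsWeyl w) (hv : IsWeyl v) : IsWeyl (w.trans v) := by
  refine ⟨fun a b => (hv.1 _ _).trans (hw.1 a b), ?_⟩
  exact (Set.image_comp v w _).trans (by rw [hw.2, hv.2])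

theorem IsWeyl.symm (hw : IsWeyl w) : IsWeyl w.symm := by
  refine ⟨fun a b => by simpa using (hw.1 (w.symm a) (w.symm b)).symm, ?_⟩
  conv_lhs => rw [← hw.2]
  simp only [Set.image_image, LinearEquiv.symm_apply_apply, Set.image_id']

theorem IsCross.exists_isDFrame (hc : IsCross c) :
    ∃ A, IsDFrame e8Lattice A ∧ crossOf A = c := by
  obtain ⟨e, f, rfl, hroot, hzero, hone⟩ := hc
  have hpairs : IsCrossPairs e f :=
    { left_dot_left := fun i j => by
        split_ifs with hij
        · exact hij ▸ (hroot i).1.2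
        · exact (hone i j hij).1
      left_dot_right := fun i j => by
        split_ifs with hij
        · exact hij ▸ hzero i
        · exact (hone i j hij).2.1
      right_dot_right := fun i j => by
        split_ifs with hij
        · exact hij ▸ (hroot i).2.2
        · exact (hone i j hij).2.2 }
  refine ⟨crossFrame e f, ⟨hpairs.isOrthonormal_crossFrame,
    add_mem_of_zero_add_mem_of_zero_sub_mem (fun i => ?_) fun i => ?_⟩, hpairs.crossOf_crossFrame⟩
  · rw [hpairs.crossFrame_zero_add_succ]
    exact (hroot i).1.1
  · rw [hpairs.crossFrame_zero_sub_succ]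
    exact (hroot i).2.1

theorem IsCross.exists_isDFrame_half_sum_mem (hc : IsCross c) :
    ∃ g, IsDFrame e8Lattice g ∧ (1 / 2 : ℝ) • ∑ i, g i ∈ e8Lattice ∧ crossOf g = c := by
  obtain ⟨g, hg, rfl⟩ := hc.exists_isDFrame
  rcases hg.half_sum_mem_or_sub_mem isEvenUnimodular_e8Lattice (Fin.succ 0) with h | h
  · exact ⟨g, hg, h, rfl⟩
  · refine ⟨_, hg.update_neg (Fin.succ 0), ?_, crossOf_update_neg g 0⟩
    convert h using 1
    rw [Finset.sum_update_of_mem (Finset.mem_univ _),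
      ← Finset.add_sum_erase _ g (Finset.mem_univ (Fin.succ 0)), Finset.sdiff_singleton_eq_erase]
    module

theorem IsCross.exists_isWeyl_image_eq_crossOf_single (hc : IsCross c) :
    ∃ w : (Fin 8 → ℝ) ≃ₗ[ℝ] (Fin 8 → ℝ),
      IsWeyl w ∧ (fun s => ⇑w '' s) '' c = crossOf fun i => Pi.single i 1 := by
  obtain ⟨g, hg, hhalf, rfl⟩ := hc.exists_isDFrame_half_sum_mem
  have hdot := hg.orthonormal.coordEquiv_dotProduct_coordEquiv
  refine ⟨hg.orthonormal.coordEquiv, isWeyl_of_mem_e8Lattice_iff hdot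
    (isEvenUnimodular_e8Lattice.map_mem_iff isEvenUnimodular_e8Lattice hdot
      fun x => hg.coordEquiv_mem_e8Lattice hhalf), ?_⟩
  simp only [image_crossOf, IsOrthonormal.coordEquiv_apply_self]

end Weyl

/-- The Weyl group acts transitively on the set `C` of
7-crosspolytope facets: any element of `C` is mapped to any other by some `w ∈ W`,
applying `w` to every root of every pair. -/
theorem stmt_8 (c1 c2 : Set (Set (Fin 8 → ℝ))) (h1 : IsCross c1) (h2 : IsCross c2) :
    ∃ w : (Fin 8 → ℝ) ≃ₗ[ℝ] (Fin 8 → ℝ),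
      IsWeyl w ∧ (fun s => ⇑w '' s) '' c1 = c2 := by
  obtain ⟨u, hu, hu_image⟩ := h1.exists_isWeyl_image_eq_crossOf_single
  obtain ⟨v, hv, hv_image⟩ := h2.exists_isWeyl_image_eq_crossOf_single
  refine ⟨u.trans v.symm, hu.trans hv.symm, ?_⟩
  calc (fun s => ⇑(u.trans v.symm) '' s) '' c1
      = (fun s => ⇑v.symm '' s) '' ((fun s => ⇑u '' s) '' c1) := by
        simp only [Set.image_image]
        rfl
    _ = (fun s => ⇑v.symm '' s) '' ((fun s => ⇑v '' s) '' c2) := by rw [hu_image, hv_image]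
    _ = c2 := by simp only [Set.image_image, LinearEquiv.symm_apply_apply, Set.image_id']
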